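/- Let P(x) = ∑_{|α|=m} a_α x^α be an m-homogeneous polynomial in n variables with real coefficients, and let P_ℂ(z) = ∑_{|α|=m} a_α z^α be its complexification. Then sup{|P_ℂ(z)| : z ∈ 𝔻^n} ≤ 2^{m−1} · sup{|P(x)| : x ∈ [−1,1]^n}, where 𝔻 is the closed unit disk in ℂ. -/

import Mathlib

open MvPolynomial Filter

/-- The sup norm of a real polynomial in `n` variables over the cube `[-1,1]^n`. -/
noncomputable def supNorm {n : ℕ} (P : MvPolynomial (Fin n) ℝ) : ℝ :=
  sSup {y : ℝ | ∃ x : Fin n → ℝ, (∀ i, |x i| ≤ 1) ∧ y = |eval x P|}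

/-- The sup norm of a complex polynomial in `n` variables over the closed polydisk `𝔻^n`. -/
noncomputable def supNormC {n : ℕ} (P : MvPolynomial (Fin n) ℂ) : ℝ :=
  sSup {y : ℝ | ∃ z : Fin n → ℂ, (∀ i, ‖z i‖ ≤ 1) ∧ y = ‖eval z P‖}

/-- The `ℓ_p` norm of the coefficients of a complex polynomial. -/
noncomputable def lpNormC {n : ℕ} (p : ℝ) (P : MvPolynomial (Fin n) ℂ) : ℝ :=
  (∑ α ∈ P.support, ‖coeff α P‖ ^ p) ^ (1 / p)

/-!
Fix `z` in the polydisk and consider the univariate polynomial `q(t) = P_ℂ(z + t z̄)`, of degree at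
most `m`, whose coefficients of `1` and `t ^ m` are `P_ℂ(z)` and `P_ℂ(z̄) = conj P_ℂ(z)`. If
`t = s ^ 2` with `|s| = 1`, then `z + t z̄ = 2 s Re(s̄ z)`, and homogeneity gives
`|q(t)| = 2 ^ m |P(Re(s̄ z))|`, where `Re(s̄ z)` lies in the cube. For `m ≥ 1`, Visser's inequality
`|q_0| + |q_m| ≤ max_{|t| = 1} |q(t)|` bounds `2 |P_ℂ(z)|` by `2 ^ m` times the sup norm of `P`.
For `m = 0`, `P` is constant and the truncated exponent `m - 1` is `0`.
-/

section RootsOfUnity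

variable {R : Type*} [CommRing R] [IsDomain R] {m : ℕ} {ω : R}

lemma sum_pow_pow_of_isPrimitiveRoot (hω : IsPrimitiveRoot ω m) (j : ℕ) :
    ∑ k ∈ Finset.range m, (ω ^ k) ^ j = if m ∣ j then (m : R) else 0 := by
  simp only [pow_right_comm ω _ j]
  split_ifs with hj
  · simp [(hω.pow_eq_one_iff_dvd j).mpr hj]
  · have hne : ω ^ j - 1 ≠ 0 := sub_ne_zero.mpr fun h => hj ((hω.pow_eq_one_iff_dvd j).mp h)
    refine (mul_eq_zero.mp ?_).resolve_left hne
    rw [mul_geom_sum, pow_right_comm, hω.pow_eq_one, one_pow, sub_self]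

lemma sum_eval_pow_of_isPrimitiveRoot (hω : IsPrimitiveRoot ω m) {q : Polynomial R}
    (hq : q.natDegree ≤ m) :
    ∑ k ∈ Finset.range m, q.eval (ω ^ k) = m * (q.coeff 0 + q.coeff m) := by
  rcases Nat.eq_zero_or_pos m with rfl | hm
  · simp
  have hinner : ∀ j ∈ Finset.range m, j ≠ 0 → q.coeff j * (if m ∣ j then (m : R) else 0) = 0 :=
    fun j hj hj0 => by
      rw [if_neg (Nat.not_dvd_of_pos_of_lt (Nat.pos_of_ne_zero hj0) (Finset.mem_range.mp hj)),
        mul_zero]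
  simp_rw [Polynomial.eval_eq_sum_range' (Nat.lt_succ_of_le hq)]
  rw [Finset.sum_comm]
  simp_rw [← Finset.mul_sum, sum_pow_pow_of_isPrimitiveRoot hω]
  rw [Finset.sum_range_succ, Finset.sum_eq_single_of_mem 0 (Finset.mem_range.mpr hm) hinner,
    if_pos (dvd_zero m), if_pos dvd_rfl]
  ring

end RootsOfUnity

lemma exists_norm_add_pow_mul_eq {m : ℕ} (hm : m ≠ 0) (a b : ℂ) :
    ∃ ζ : ℂ, ‖ζ‖ = 1 ∧ ‖a + ζ ^ m * b‖ = ‖a‖ + ‖b‖ := by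
  obtain ⟨c, hc, hca⟩ := Complex.exists_norm_mul_eq_self a
  obtain ⟨d, hd, hdb⟩ := Complex.exists_norm_eq_mul_self b
  obtain ⟨ζ, hζ⟩ := IsAlgClosed.exists_pow_nat_eq (c * d) (Nat.pos_of_ne_zero hm)
  refine ⟨ζ, (pow_eq_one_iff_of_nonneg (norm_nonneg ζ) hm).mp ?_, ?_⟩
  · rw [← norm_pow, hζ, norm_mul, hc, hd, one_mul]
  · calc ‖a + ζ ^ m * b‖ = ‖c * ((‖a‖ + ‖b‖ : ℝ) : ℂ)‖ := by
          rw [hζ, mul_assoc, ← hdb, Complex.ofReal_add, mul_add, hca]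
      _ = ‖a‖ + ‖b‖ := by
          rw [norm_mul, hc, one_mul, Complex.norm_of_nonneg (by positivity)]

/-- Visser's inequality: after a rotation making the two coefficients point in the same direction,
average `q` over the `m`-th roots of unity. -/
lemma norm_coeff_zero_add_norm_coeff_le {m : ℕ} (hm : m ≠ 0) {q : Polynomial ℂ}
    (hq : q.natDegree ≤ m) {M : ℝ} (hM : ∀ t : ℂ, ‖t‖ = 1 → ‖q.eval t‖ ≤ M) :
    ‖q.coeff 0‖ + ‖q.coeff m‖ ≤ M := by
  obtain ⟨ζ, hζ, hadd⟩ := exists_norm_add_pow_mul_eq hm (q.coeff 0) (q.coeff m)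
  obtain ⟨ω, hω⟩ : ∃ ω : ℂ, IsPrimitiveRoot ω m := ⟨_, Complex.isPrimitiveRoot_exp m hm⟩
  have hlin : (.C ζ * .X : Polynomial ℂ).natDegree ≤ 1 := by compute_degree
  have hdeg : (q.comp (.C ζ * .X)).natDegree ≤ m :=
    Polynomial.natDegree_comp_le.trans (by simpa using Nat.mul_le_mul hq hlin)
  have hmean : ∑ k ∈ Finset.range m, q.eval (ζ * ω ^ k) =
      m * (q.coeff 0 + ζ ^ m * q.coeff m) := by
    simpa [mul_comm (ζ ^ m)] using sum_eval_pow_of_isPrimitiveRoot hω hdeg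
  have hterm : ∀ k ∈ Finset.range m, ‖q.eval (ζ * ω ^ k)‖ ≤ M := fun k _ =>
    hM _ (by rw [norm_mul, hζ, norm_pow, hω.norm'_eq_one hm, one_pow, one_mul])
  have hle : m * (‖q.coeff 0‖ + ‖q.coeff m‖) ≤ m * M := by
    calc m * (‖q.coeff 0‖ + ‖q.coeff m‖)
        = ‖∑ k ∈ Finset.range m, q.eval (ζ * ω ^ k)‖ := by
          rw [hmean, norm_mul, Complex.norm_natCast, hadd]
      _ ≤ m * M := by simpa using norm_sum_le_of_le _ hterm
  exact le_of_mul_le_mul_left hle (by positivity)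

section Homogeneous

variable {σ R : Type*} [CommSemiring R] {m : ℕ} {Q : MvPolynomial σ R}

lemma eval_aeval_polynomial (f : σ → Polynomial R) (P : MvPolynomial σ R) (t : R) :
    (aeval f P).eval t = eval (fun i => (f i).eval t) P := by
  simp only [← Polynomial.coe_aeval_eq_eval, comp_aeval_apply, ← aeval_eq_eval]

lemma eval_smul_of_isHomogeneous (hQ : Q.IsHomogeneous m) (c : R) (z : σ → R) :
    eval (c • z) Q = c ^ m * eval z Q := by
  simp only [eval_eq, Finset.mul_sum]
  refine Finset.sum_congr rfl fun d hd => ?_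
  simp only [Pi.smul_apply, smul_eq_mul, mul_pow, Finset.prod_mul_distrib,
    Finset.prod_pow_eq_pow_sum, hQ.degree_eq_sum_deg_support hd, mul_left_comm]

lemma prod_map_toMultiset {A : Type*} [CommMonoid A] (g : σ → A) (d : σ →₀ ℕ) :
    (d.toMultiset.map g).prod = d.prod fun i e => g i ^ e := by
  rw [Finsupp.toMultiset_map, Finsupp.prod_toMultiset,
    Finsupp.prod_mapDomain_index pow_zero pow_add]

lemma coeff_prod_pow_of_natDegree_le {k : ℕ} {f : σ → Polynomial R}
    (hf : ∀ i, (f i).natDegree ≤ k) (d : σ →₀ ℕ) :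
    (d.prod fun i e => f i ^ e).coeff (d.degree * k) = d.prod fun i e => (f i).coeff k ^ e := by
  have hcoeff := Polynomial.coeff_multiset_prod_of_natDegree_le (d.toMultiset.map f) k
    (by simpa using fun i _ => hf i)
  rwa [Multiset.map_map, Multiset.card_map, Finsupp.card_toMultiset, prod_map_toMultiset,
    prod_map_toMultiset] at hcoeff

lemma coeff_aeval_of_isHomogeneous (hQ : Q.IsHomogeneous m) {k : ℕ} {f : σ → Polynomial R}
    (hf : ∀ i, (f i).natDegree ≤ k) :
    (aeval f Q).coeff (m * k) = eval (fun i => (f i).coeff k) Q := by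
  simp only [aeval_def, eval₂_eq, eval_eq, Polynomial.finsetSum_coeff]
  refine Finset.sum_congr rfl fun d hd => ?_
  rw [Polynomial.algebraMap_eq, Polynomial.coeff_C_mul, hQ.degree_eq_sum_deg_support hd]
  exact congrArg _ (coeff_prod_pow_of_natDegree_le hf d)

end Homogeneous

lemma norm_eval_add_norm_eval_le_of_isHomogeneous {σ : Type*} {m : ℕ} (hm : m ≠ 0)
    {Q : MvPolynomial σ ℂ} (hQ : Q.IsHomogeneous m) (z w : σ → ℂ) {M : ℝ}
    (hM : ∀ t : ℂ, ‖t‖ = 1 → ‖eval (z + t • w) Q‖ ≤ M) :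
    ‖eval z Q‖ + ‖eval w Q‖ ≤ M := by
  set f : σ → Polynomial ℂ := fun i => .C (w i) * .X + .C (z i) with hf
  have hdeg : ∀ i, (f i).natDegree ≤ 1 := fun i => Polynomial.natDegree_linear_le
  have heval : ∀ t, (aeval f Q).eval t = eval (z + t • w) Q := fun t => by
    rw [eval_aeval_polynomial]
    exact congrArg (eval · Q) (funext fun i => by
      simp only [hf, Polynomial.eval_add, Polynomial.eval_mul, Polynomial.eval_C,
        Polynomial.eval_X, Pi.add_apply, Pi.smul_apply, smul_eq_mul]
      ring)
  have hzero : (aeval f Q).coeff 0 = eval z Q := by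
    rw [Polynomial.coeff_zero_eq_eval_zero, heval, zero_smul, add_zero]
  have htop : (aeval f Q).coeff m = eval w Q := by
    simpa [hf] using coeff_aeval_of_isHomogeneous hQ hdeg
  rw [← hzero, ← htop]
  refine norm_coeff_zero_add_norm_coeff_le hm ?_ fun t ht => heval t ▸ hM t ht
  simpa using aeval_natDegree_le Q hQ.totalDegree_le f hdeg

section Complexification

variable {σ : Type*}

lemma eval_ofReal_map (P : MvPolynomial σ ℝ) (x : σ → ℝ) :
    eval (fun i => (x i : ℂ)) (map (algebraMap ℝ ℂ) P) = (eval x P : ℝ) := by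
  simpa [eval_map, aeval_def, Function.comp_def] using aeval_algebraMap_apply ℂ x P

lemma eval_star_map (P : MvPolynomial σ ℝ) (z : σ → ℂ) :
    eval (star z) (map (algebraMap ℝ ℂ) P) = star (eval z (map (algebraMap ℝ ℂ) P)) := by
  simpa [eval_map, aeval_def, Pi.star_def] using (comp_aeval_apply z Complex.conjAe.toAlgHom P).symm

lemma add_sq_smul_star {s : ℂ} (hs : ‖s‖ = 1) (z : σ → ℂ) :
    z + s ^ 2 • star z = (2 * s) • fun i => ((star s * z i).re : ℂ) := by
  funext i
  have hunit : s * star s = 1 := by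
    rw [Complex.star_def, Complex.mul_conj', hs, Complex.ofReal_one, one_pow]
  have hre : star s * z i + s * star (z i) = 2 * ((star s * z i).re : ℂ) := by
    simpa only [Complex.star_def, map_mul, Complex.conj_conj, Complex.ofReal_mul,
      Complex.ofReal_ofNat] using Complex.add_conj (star s * z i)
  simp only [Pi.add_apply, Pi.smul_apply, Pi.star_apply, smul_eq_mul]
  linear_combination s * hre - z i * hunit

lemma norm_eval_map_le_of_isHomogeneous {m : ℕ} {P : MvPolynomial σ ℝ} (hP : P.IsHomogeneous m)
    (z : σ → ℂ) {M : ℝ}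
    (hM : ∀ s : ℂ, ‖s‖ = 1 → |eval (fun i => (s * z i).re) P| ≤ M) :
    ‖eval z (map (algebraMap ℝ ℂ) P)‖ ≤ 2 ^ (m - 1) * M := by
  rcases Nat.eq_zero_or_pos m with rfl | hm
  · obtain ⟨a, rfl⟩ : ∃ a, P = C a := ⟨_, totalDegree_eq_zero_iff_eq_C.mp
      (Nat.le_zero.mp hP.totalDegree_le)⟩
    simpa using hM 1 norm_one
  set Q := map (algebraMap ℝ ℂ) P
  have hQ : Q.IsHomogeneous m := hP.map _
  have hslice : ∀ t : ℂ, ‖t‖ = 1 → ‖eval (z + t • star z) Q‖ ≤ 2 ^ m * M := by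
    intro t ht
    obtain ⟨s, rfl⟩ := IsAlgClosed.exists_pow_nat_eq t two_pos
    have hs : ‖s‖ = 1 := (pow_eq_one_iff_of_nonneg (norm_nonneg s) two_ne_zero).mp
      (by rwa [← norm_pow])
    rw [add_sq_smul_star hs, eval_smul_of_isHomogeneous hQ, eval_ofReal_map, norm_mul, norm_pow,
      norm_mul, hs, Complex.norm_two, mul_one, Complex.norm_real, Real.norm_eq_abs]
    gcongr
    exact hM _ (by rw [norm_star, hs])
  have hsum := norm_eval_add_norm_eval_le_of_isHomogeneous hm.ne' hQ z (star z) hslice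
  rw [eval_star_map, norm_star, ← Nat.sub_add_cancel hm, pow_succ] at hsum
  linarith

end Complexification

lemma abs_eval_le_supNorm {n : ℕ} (P : MvPolynomial (Fin n) ℝ) {x : Fin n → ℝ}
    (hx : ∀ i, |x i| ≤ 1) : |eval x P| ≤ supNorm P := by
  refine le_csSup ?_ ⟨x, hx, rfl⟩
  have hcompact : IsCompact (Set.Icc (-1 : Fin n → ℝ) 1) := isCompact_Icc
  refine (hcompact.bddAbove_image (continuous_eval P).abs.continuousOn).mono ?_
  rintro _ ⟨x, hx, rfl⟩
  exact ⟨x, ⟨fun i => (abs_le.mp (hx i)).1, fun i => (abs_le.mp (hx i)).2⟩, rfl⟩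

/-- If `P` is an `m`-homogeneous polynomial in `n` variables with real coefficients and
`P_ℂ` is its complexification, then
`sup{|P_ℂ(z)| : z ∈ 𝔻^n} ≤ 2^{m-1} · sup{|P(x)| : x ∈ [-1,1]^n}`. -/
theorem supNormC_complexification_le (n m : ℕ) (P : MvPolynomial (Fin n) ℝ)
    (hP : P.IsHomogeneous m) :
    supNormC (map (algebraMap ℝ ℂ) P) ≤ 2 ^ (m - 1) * supNorm P := by
  refine csSup_le ⟨_, 0, by simp, rfl⟩ ?_
  rintro _ ⟨z, hz, rfl⟩
  refine norm_eval_map_le_of_isHomogeneous hP z fun s hs => abs_eval_le_supNorm P fun i => ?_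
  calc |(s * z i).re| ≤ ‖s * z i‖ := Complex.abs_re_le_norm _
    _ = ‖z i‖ := by rw [norm_mul, hs, one_mul]
    _ ≤ 1 := hz i
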